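/- Let n = p + q be even and let M be the 2ⁿ × 2ⁿ real matrix indexed by subsets of {1,…,n}, with entries m_{AB} = +1 if e^A and e^B commute and m_{AB} = −1 if they anticommute (equivalently m_{AB} = (−1)^{|A||B|−|A∩B|}). Then M is symmetric and invertible with M^{-1} = 2^{-n} M; equivalently M² = 2ⁿ·I. -/

import Mathlib

/-!
The sign `m_{AB}` is the bimultiplicative extension of the sign `s(a,b)` (`+1` if `a = b`, `-1`
otherwise) by which two generators commute: `m_{AB} = ∏_{b ∈ B} ∏_{a ∈ A} s(a,b)`
(`Mmat_eq_prod`). Moving generators past each other one at a time then gives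
`e^A e^B = m_{AB} e^B e^A` (`eB_mul_eB`).

For the square of `M`, put `f_A(b) = ∏_{a ∈ A} s(a,b)`. By symmetry of `M`,
`(M²)_{AC} = ∑_B ∏_{b ∈ B} f_A(b) f_C(b) = ∏_b (1 + f_A(b) f_C(b))`. On the diagonal every factor
is `2`. Off the diagonal some factor vanishes, because for even `n` the sign function `f_A`
determines `A` (`exists_sign_mul_eq_neg_one`).
-/

open CliffordAlgebra

/-- Diagonal metric with `p` entries `+1` and `q` entries `-1`. -/
noncomputable def eta (p q : ℕ) : Fin (p + q) → ℝ :=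
  fun a => if (a : ℕ) < p then 1 else -1

/-- The quadratic form of signature `(p, q)` on `ℝⁿ`, `n = p + q`. -/
noncomputable def Qpq (p q : ℕ) : QuadraticForm ℝ (Fin (p + q) → ℝ) :=
  QuadraticMap.weightedSumSquares ℝ (eta p q)

/-- The real Clifford algebra `Cl(p, q)`. -/
noncomputable abbrev Cl (p q : ℕ) : Type :=
  CliffordAlgebra (Qpq p q)

/-- The generator `e^a` of `Cl(p, q)`. -/
noncomputable def gen (p q : ℕ) (a : Fin (p + q)) : Cl p q :=
  CliffordAlgebra.ι (Qpq p q) (Pi.single a 1)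

/-- The basis element `e^A`: the product of the generators `e^a`, `a ∈ A`,
taken in increasing order (`e^∅ = 1`). -/
noncomputable def eB (p q : ℕ) (A : Finset (Fin (p + q))) : Cl p q :=
  ((A.sort (· ≤ ·)).map (gen p q)).prod

/-- The `2ⁿ × 2ⁿ` matrix with entries `m_{AB} = (−1)^{|A||B| − |A∩B|}`, recording
whether `e^A` and `e^B` commute (`+1`) or anticommute (`−1`). -/
noncomputable def Mmat (p q : ℕ) :
    Matrix (Finset (Fin (p + q))) (Finset (Fin (p + q))) ℝ :=
  fun A B => (-1 : ℝ) ^ (A.card * B.card - (A ∩ B).card)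

/-- The commutation sign of two generators: `e^a e^b = s(a,b) e^b e^a`. -/
noncomputable def genSign {n : ℕ} (a b : Fin n) : ℝ := if a = b then 1 else -1

lemma gen_mul_gen (p q : ℕ) (a b : Fin (p + q)) :
    gen p q a * gen p q b = genSign a b • (gen p q b * gen p q a) := by
  unfold genSign
  split_ifs with h
  · simp [h]
  · rw [neg_one_smul]
    refine eq_neg_of_add_eq_zero_left ?_
    unfold gen
    rw [CliffordAlgebra.ι_mul_ι_add_swap]
    -- Distinct coordinate vectors are orthogonal for the diagonal form.
    have hpolar : QuadraticMap.polar (Qpq p q) (Pi.single a 1) (Pi.single b 1) = 0 := by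
      simp only [QuadraticMap.polar, Qpq, QuadraticMap.weightedSumSquares_apply,
        ← Finset.sum_sub_distrib]
      refine Finset.sum_eq_zero fun i _ => ?_
      rcases eq_or_ne i a with rfl | hia
      · simp [h]
      · simp [hia]
    rw [hpolar, map_zero]

lemma gen_mul_list_prod (p q : ℕ) (a : Fin (p + q)) (L : List (Fin (p + q))) :
    gen p q a * (L.map (gen p q)).prod =
      (L.map (genSign a)).prod • ((L.map (gen p q)).prod * gen p q a) := by
  induction L with
  | nil => simp
  | cons b L ih =>
    simp only [List.map_cons, List.prod_cons]
    rw [← mul_assoc, gen_mul_gen, smul_mul_assoc, mul_assoc, ih, mul_smul_comm, smul_smul,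
      mul_assoc]

lemma list_prod_mul_list_prod (p q : ℕ) (K L : List (Fin (p + q))) :
    (K.map (gen p q)).prod * (L.map (gen p q)).prod =
      (K.map fun a => (L.map (genSign a)).prod).prod •
        ((L.map (gen p q)).prod * (K.map (gen p q)).prod) := by
  induction K with
  | nil => simp
  | cons a K ih =>
    simp only [List.map_cons, List.prod_cons]
    rw [mul_assoc, ih, mul_smul_comm, ← mul_assoc, gen_mul_list_prod, smul_mul_assoc, smul_smul,
      mul_assoc, mul_comm (List.prod _)]

lemma sort_map_prod {n : ℕ} (A : Finset (Fin n)) (f : Fin n → ℝ) :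
    ((A.sort (· ≤ ·)).map f).prod = ∏ a ∈ A, f a := by
  rw [← List.prod_toFinset f (A.sort_nodup (· ≤ ·)), Finset.sort_toFinset]

lemma prod_genSign {n : ℕ} (A : Finset (Fin n)) (b : Fin n) :
    ∏ a ∈ A, genSign a b = (-1) ^ A.card * (if b ∈ A then -1 else 1) := by
  have h : ∀ a, genSign a b = -1 * (if a = b then -1 else 1) := by
    intro a; unfold genSign; split_ifs <;> norm_num
  simp_rw [h, Finset.prod_mul_distrib, Finset.prod_const]
  rw [Finset.prod_ite_eq']

/-- `M` is the bimultiplicative extension of the sign of two generators. The truncated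
subtraction in the exponent is harmless, as `|A ∩ B| ≤ |A||B|`. -/
lemma Mmat_eq_prod (p q : ℕ) (A B : Finset (Fin (p + q))) :
    Mmat p q A B = ∏ b ∈ B, ∏ a ∈ A, genSign a b := by
  have hle : (A ∩ B).card ≤ A.card * B.card := by
    rcases B.eq_empty_or_nonempty with rfl | hB
    · simp
    · exact (Finset.card_le_card Finset.inter_subset_left).trans
        (Nat.le_mul_of_pos_right _ hB.card_pos)
  simp_rw [prod_genSign, Finset.prod_mul_distrib, Finset.prod_const, ← pow_mul]
  rw [Finset.prod_ite, Finset.prod_const_one, mul_one, Finset.prod_const,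
    Finset.filter_mem_eq_inter, Finset.inter_comm B A, Mmat]
  obtain ⟨k, hk⟩ := Nat.exists_eq_add_of_le hle
  rw [hk, Nat.add_sub_cancel_left, pow_add, mul_right_comm, ← mul_pow]
  norm_num

lemma Mmat_symm (p q : ℕ) (A B : Finset (Fin (p + q))) : Mmat p q A B = Mmat p q B A := by
  simp only [Mmat, mul_comm, Finset.inter_comm]

lemma eB_mul_eB (p q : ℕ) (A B : Finset (Fin (p + q))) :
    eB p q A * eB p q B = Mmat p q A B • (eB p q B * eB p q A) := by
  unfold eB
  rw [list_prod_mul_list_prod, sort_map_prod, Mmat_eq_prod, Finset.prod_comm]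
  simp_rw [sort_map_prod]

/-- For `n` even, the characters `b ↦ m_{A{b}}` and `b ↦ m_{C{b}}` attached to distinct subsets
differ at some `b`. Agreement everywhere forces `C = A` or `C = Aᶜ`, according to the parity of
`|A| + |C|`; the latter case has `|A| + |C| = n` odd. -/
lemma exists_sign_mul_eq_neg_one {n : ℕ} (hev : Even n) {A C : Finset (Fin n)} (hAC : A ≠ C) :
    ∃ b, (∏ a ∈ A, genSign a b) * ∏ c ∈ C, genSign c b = -1 := by
  simp_rw [prod_genSign]
  have key : ∀ b, ((-1 : ℝ) ^ A.card * (if b ∈ A then -1 else 1)) *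
      ((-1) ^ C.card * (if b ∈ C then -1 else 1)) =
      (-1) ^ (A.card + C.card) * ((if b ∈ A then -1 else 1) * (if b ∈ C then -1 else 1)) := by
    intro b; ring
  simp_rw [key]
  rcases Nat.even_or_odd (A.card + C.card) with h | h
  · rw [h.neg_one_pow]
    obtain ⟨b, hb⟩ : ∃ b, ¬(b ∈ A ↔ b ∈ C) := by
      by_contra! hcon
      exact hAC (Finset.ext hcon)
    refine ⟨b, ?_⟩
    by_cases hA : b ∈ A <;> by_cases hC : b ∈ C <;> simp_all
  · rw [h.neg_one_pow]
    obtain ⟨b, hb⟩ : ∃ b, (b ∈ A ↔ b ∈ C) := by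
      by_contra hcon
      have hC : C = Aᶜ := by
        ext b
        rw [Finset.mem_compl]
        have := not_exists.mp hcon b
        tauto
      rw [hC, Finset.card_add_card_compl, Fintype.card_fin] at h
      exact (Nat.not_even_iff_odd.mpr h) hev
    refine ⟨b, ?_⟩
    by_cases hA : b ∈ A <;> simp_all

lemma Mmat_mul_self (p q : ℕ) (hev : Even (p + q)) :
    Mmat p q * Mmat p q = ((2 : ℝ) ^ (p + q)) • (1 : Matrix _ _ ℝ) := by
  ext A C
  have hsum : (Mmat p q * Mmat p q) A C =
      ∏ b, (1 + (∏ a ∈ A, genSign a b) * ∏ c ∈ C, genSign c b) := by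
    rw [Matrix.mul_apply, Finset.prod_one_add, Finset.powerset_univ]
    refine Finset.sum_congr rfl fun B _ => ?_
    rw [Mmat_symm p q B C, Mmat_eq_prod, Mmat_eq_prod, Finset.prod_mul_distrib]
  rw [hsum, Matrix.smul_apply, Matrix.one_apply]
  split_ifs with h
  · subst h
    have hsq : ∀ b, (∏ a ∈ A, genSign a b) * ∏ c ∈ A, genSign c b = 1 := by
      intro b
      rw [← Finset.prod_mul_distrib]
      refine Finset.prod_eq_one fun a _ => ?_
      unfold genSign; split_ifs <;> norm_num
    simp_rw [hsq]
    norm_num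
  · obtain ⟨b, hb⟩ := exists_sign_mul_eq_neg_one hev h
    rw [Finset.prod_eq_zero (Finset.mem_univ b) (by rw [hb]; norm_num)]
    simp

/-- For even `n`, the matrix `M` (with `m_{AB} = +1` if `e^A`, `e^B` commute and `−1`
if they anticommute) is symmetric and invertible with `M⁻¹ = 2⁻ⁿ M`;
equivalently `M² = 2ⁿ·I`. -/
theorem Mmat_symm_invertible_even (p q : ℕ) (hn : 1 ≤ p + q) (hev : Even (p + q)) :
    (∀ A B : Finset (Fin (p + q)),
      (Mmat p q A B = 1 ∧ Commute (eB p q A) (eB p q B)) ∨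
      (Mmat p q A B = -1 ∧ eB p q A * eB p q B = -(eB p q B * eB p q A))) ∧
    (Mmat p q).IsSymm ∧
    IsUnit (Mmat p q) ∧
    (Mmat p q)⁻¹ = ((2 : ℝ) ^ (p + q))⁻¹ • Mmat p q ∧
    Mmat p q * Mmat p q = ((2 : ℝ) ^ (p + q)) • (1 : Matrix _ _ ℝ) := by
  have hsq := Mmat_mul_self p q hev
  have hinv : Mmat p q * (((2 : ℝ) ^ (p + q))⁻¹ • Mmat p q) = 1 := by
    rw [Matrix.mul_smul, hsq, smul_smul, inv_mul_cancel₀ (by positivity), one_smul]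
  refine ⟨fun A B => ?_, Matrix.IsSymm.ext fun A B => Mmat_symm p q B A,
    IsUnit.of_mul_eq_one _ hinv, Matrix.inv_eq_right_inv hinv, hsq⟩
  have hcomm := eB_mul_eB p q A B
  rcases neg_one_pow_eq_or ℝ (A.card * B.card - (A ∩ B).card) with h | h
  · left
    change Mmat p q A B = 1 at h
    rw [h, one_smul] at hcomm
    exact ⟨h, hcomm⟩
  · right
    change Mmat p q A B = -1 at h
    rw [h, neg_one_smul] at hcomm
    exact ⟨h, hcomm⟩
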